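/- Let A, B ⊆ ℝ² be compact convex sets, each with nonempty interior, and let t ∈ ℝ². Then t lies on the frontier (topological boundary) of the no-fit polygon NFP_{AB} = A + (−B) if and only if A and the translate t + B are in contact, i.e., A ∩ (t + B) ≠ ∅ while interior(A) ∩ interior(t + B) = ∅. -/

import Mathlib

open Set
open scoped Pointwise

/-!
Since `t` lies in `S + -T` exactly when `S` meets `t +ᵥ T`, everything rests on the identity
`interior (A + B) = interior A + interior B` for convex sets with nonempty interior. The set
`interior A + B` is open, convex and dense in `A + B`, hence equal to `interior (A + B)`; and
adding an open set does not distinguish `B` from its closure, which is also the closure of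
`interior B`.
-/

theorem mem_add_neg_iff_inter_vadd_nonempty {G : Type*} [AddGroup G] {A B : Set G} {t : G} :
    t ∈ A + -B ↔ (A ∩ (t +ᵥ B)).Nonempty := by
  rw [inter_comm, vadd_inter_nonempty_iff', ← sub_eq_add_neg, mem_sub]
  simp only [and_assoc, exists_and_left]

section Convex

variable {𝕜 E : Type*} [Field 𝕜] [LinearOrder 𝕜] [IsStrictOrderedRing 𝕜] [TopologicalSpace 𝕜]
  [OrderTopology 𝕜] [AddCommGroup E] [Module 𝕜 E] [TopologicalSpace E] [IsTopologicalAddGroup E]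
  [ContinuousSMul 𝕜 E] {A B : Set E} {t : E}

theorem interior_add_eq_interior_add_of_convex (hA : Convex 𝕜 A) (hA' : (interior A).Nonempty)
    (hB : Convex 𝕜 B) : interior (A + B) = interior A + B := by
  refine Subset.antisymm ?_ subset_interior_add_left
  obtain rfl | hB' := B.eq_empty_or_nonempty
  · simp
  have hopen : IsOpen (interior A + B) := isOpen_interior.add_right
  have hconv : Convex 𝕜 (interior A + B) := hA.interior.add hB
  have hdense : A + B ⊆ closure (interior A + B) := calc
    A + B ⊆ closure (interior A) + closure B := by
      rw [hA.closure_interior_eq_closure_of_nonempty_interior hA']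
      exact add_subset_add subset_closure subset_closure
    _ ⊆ closure (interior A + B) := vadd_set_closure_subset _ _
  calc
    interior (A + B) ⊆ interior (closure (interior A + B)) := interior_mono hdense
    _ = interior A + B := by
      rw [hconv.interior_closure_eq_interior_of_nonempty_interior
        (hopen.interior_eq.symm ▸ hA'.add hB'), hopen.interior_eq]

theorem interior_add_of_convex (hA : Convex 𝕜 A) (hA' : (interior A).Nonempty)
    (hB : Convex 𝕜 B) (hB' : (interior B).Nonempty) :
    interior (A + B) = interior A + interior B := by
  rw [interior_add_eq_interior_add_of_convex hA hA' hB, ← isOpen_interior.add_closure B,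
    ← hB.closure_interior_eq_closure_of_nonempty_interior hB', isOpen_interior.add_closure]

theorem mem_interior_add_neg_iff_interior_inter_nonempty (hA : Convex 𝕜 A)
    (hA' : (interior A).Nonempty) (hB : Convex 𝕜 B) (hB' : (interior B).Nonempty) :
    t ∈ interior (A + -B) ↔ (interior A ∩ interior (t +ᵥ B)).Nonempty := by
  have hneg : interior (-B) = -interior B := ((Homeomorph.neg E).preimage_interior B).symm
  rw [interior_add_of_convex hA hA' hB.neg (hneg ▸ hB'.neg), hneg,
    mem_add_neg_iff_inter_vadd_nonempty, interior_vadd]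

theorem nfp_frontier_iff_contact_general (hA : Convex 𝕜 A) (hA' : (interior A).Nonempty)
    (hB : Convex 𝕜 B) (hB' : (interior B).Nonempty) (hclosed : IsClosed (A + -B)) :
    t ∈ frontier (A + -B) ↔
      (A ∩ (t +ᵥ B)).Nonempty ∧ interior A ∩ interior (t +ᵥ B) = ∅ := by
  rw [hclosed.frontier_eq, mem_sdiff, mem_add_neg_iff_inter_vadd_nonempty,
    mem_interior_add_neg_iff_interior_inter_nonempty hA hA' hB hB', not_nonempty_iff_eq_empty]

end Convex

/-- Frontier of the no-fit polygon = contact positions: for compact convex plane sets `A`, `B`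
with nonempty interior, `t` is on the frontier of `A + (-B)` iff `A` and `t +ᵥ B` touch
(they intersect but their interiors are disjoint). -/
theorem nfp_frontier_iff_contact (A B : Set (ℝ × ℝ)) (t : ℝ × ℝ)
    (hAc : IsCompact A) (hAconv : Convex ℝ A) (hAint : (interior A).Nonempty)
    (hBc : IsCompact B) (hBconv : Convex ℝ B) (hBint : (interior B).Nonempty) :
    t ∈ frontier (A + -B) ↔
      (A ∩ (t +ᵥ B)).Nonempty ∧ interior A ∩ interior (t +ᵥ B) = ∅ :=
  nfp_frontier_iff_contact_general hAconv hAint hBconv hBint (hAc.add hBc.neg).isClosed
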